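/- arXiv:1511.08176 — 6 statements merged into one kernel-verified Lean document; each statement's English description precedes it below -/
import Mathlib

section
/- Define a sequence f on positive integers by f(1)=1, f(2)=4, and f(r+1)=2(f(r)+1) for r ≥ 2. Let p be an odd prime and n ≥ 1 an integer. Let G be a group, let T be a finite free ℤ/pⁿ-module equipped with a G-action, and suppose T has reducibility depth 𝔫_T with 𝔫_T ≤ n. Let S be a free ℤ/pⁿ-module of rank r ≥ 1 (with trivial G-action), and let H be a subgroup of Hom_{ℤ/pⁿ}(S,T) that is stable under the G-action on Hom(S,T) by postcomposition, such that the evaluation map S → Hom_G(H,T), s ↦ (h ↦ h(s)), is injective. Then H contains p^{f(r)·𝔫_T}·Hom_{ℤ/pⁿ}(S,T). -/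
/-- The sequence `f` with `f(1) = 1`, `f(2) = 4` and `f(r+1) = 2(f(r)+1)` for `r ≥ 2`. -/
def ffSeq : ℕ → ℕ
  | 0 => 0
  | 1 => 1
  | 2 => 4
  | (r + 3) => 2 * (ffSeq (r + 2) + 1)

/-- The submodule `a•M` of all multiples of `a` in `M`. -/
def smulTop {R : Type*} [CommRing R] (a : R) (M : Type*) [AddCommGroup M] [Module R M] :
    Submodule R M :=
  LinearMap.range (a • (LinearMap.id : M →ₗ[R] M))

theorem smulTop_le_comap {R : Type*} [CommRing R] (a : R) {M : Type*} [AddCommGroup M]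
    [Module R M] (f : M →ₗ[R] M) : smulTop a M ≤ (smulTop a M).comap f := by
  rintro x ⟨y, rfl⟩
  exact ⟨f y, by simp⟩

/-- The endomorphism of `M/aM` induced by an endomorphism of `M`. -/
def quotEnd {R : Type*} [CommRing R] (a : R) {M : Type*} [AddCommGroup M] [Module R M]
    (f : M →ₗ[R] M) : Module.End R (M ⧸ smulTop a M) :=
  Submodule.mapQ _ _ f (smulTop_le_comap a f)

/-- The two conditions entering the definition of the reducibility depth of a module `M`
over a ring `R` (with distinguished element `π`, e.g. `π = p` in `ℤ/pⁿ`) equipped with an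
action of `G`:
(i) every `G`-stable submodule of `M` not contained in `πM` contains `π^d M`;
(ii) for every `m ≥ 1`, the quotient of `Hom_G(M/π^m M, M/π^m M)` by the scalars is
annihilated by `π^d`. -/
def ReducibilityCond {R : Type*} [CommRing R] (π : R) {G : Type*} {M : Type*}
    [AddCommGroup M] [Module R M] (act : G → Module.End R M) (d : ℕ) : Prop :=
  (∀ N : Submodule R M, (∀ g : G, ∀ x ∈ N, act g x ∈ N) →
      ¬ N ≤ smulTop π M → smulTop (π ^ d) M ≤ N) ∧
  (∀ m : ℕ, 1 ≤ m →
    ∀ ψ : Module.End R (M ⧸ smulTop (π ^ m) M),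
      (∀ g : G, ψ ∘ₗ quotEnd (π ^ m) (act g) = quotEnd (π ^ m) (act g) ∘ₗ ψ) →
      ∃ c : R, π ^ d • ψ = c • (LinearMap.id : M ⧸ smulTop (π ^ m) M →ₗ[R] M ⧸ smulTop (π ^ m) M))

/-- `d` is the reducibility depth of `M`: the least integer satisfying the two conditions. -/
def HasReducibilityDepth {R : Type*} [CommRing R] (π : R) {G : Type*} {M : Type*}
    [AddCommGroup M] [Module R M] (act : G → Module.End R M) (d : ℕ) : Prop :=
  ReducibilityCond π act d ∧ ∀ e : ℕ, ReducibilityCond π act e → d ≤ e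

/-- Membership in `smulTop a M` is divisibility by `a`. -/
theorem mem_smulTop {R : Type*} [CommRing R] {a : R} {M : Type*} [AddCommGroup M] [Module R M]
    {x : M} : x ∈ smulTop a M ↔ ∃ y, a • y = x := Iff.rfl

/-- A stable submodule `K` is squeezed between `π ^ (a + d) M` and `π ^ a M` for some `a ≤ n`,
as soon as `π ^ n = 0` and `d` satisfies the reducibility conditions. -/
theorem ReducibilityCond.exists_le_and_le {R : Type*} [CommRing R] {π : R} {G M : Type*}
    [AddCommGroup M] [Module R M] {act : G → Module.End R M} {d n : ℕ}
    (hd : ReducibilityCond π act d) (hπ : π ^ n = 0) (K : Submodule R M)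
    (hK : ∀ g, ∀ x ∈ K, act g x ∈ K) :
    ∃ a ≤ n, K ≤ smulTop (π ^ a) M ∧ smulTop (π ^ (a + d)) M ≤ K := by
  classical
  obtain ⟨a, han, ha, hmax⟩ : ∃ a ≤ n, K ≤ smulTop (π ^ a) M ∧
      (a < n → ¬ K ≤ smulTop (π ^ (a + 1)) M) := by
    refine ⟨Nat.findGreatest (fun a => K ≤ smulTop (π ^ a) M) n, Nat.findGreatest_le _, ?_, ?_⟩
    · refine Nat.findGreatest_spec (P := fun a => K ≤ smulTop (π ^ a) M) (Nat.zero_le n) ?_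
      exact fun x _ => ⟨x, by simp⟩
    · exact fun h => Nat.findGreatest_is_greatest (Nat.lt_succ_self _) h
  refine ⟨a, han, ha, ?_⟩
  rcases han.eq_or_lt with rfl | han
  · rintro _ ⟨y, rfl⟩
    simp [pow_add, hπ]
  · have hK₀ := hd.1 (K.comap (π ^ a • LinearMap.id)) (fun g x hx => by
      simpa using hK g _ hx) (fun hle => hmax han fun x hx => by
        obtain ⟨y, rfl⟩ := mem_smulTop.1 (ha hx)
        obtain ⟨z, rfl⟩ := mem_smulTop.1 (hle (show y ∈ _ by simpa using hx))
        exact mem_smulTop.2 ⟨z, by rw [pow_succ, mul_smul]⟩)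
    rintro _ ⟨y, rfl⟩
    simpa [pow_add, mul_smul, smul_comm (π ^ a)] using hK₀ (mem_smulTop.2 ⟨y, rfl⟩)

/-- Equivariant maps `M → M / π ^ a M` become scalar after multiplication by `π ^ d`. -/
theorem ReducibilityCond.exists_smul_eq {R : Type*} [CommRing R] {π : R} {G M : Type*}
    [AddCommGroup M] [Module R M] {act : G → Module.End R M} {d a : ℕ}
    (hd : ReducibilityCond π act d) (ha : 1 ≤ a) (θ : M →ₗ[R] M ⧸ smulTop (π ^ a) M)
    (hθ : ∀ g x, θ (act g x) = quotEnd (π ^ a) (act g) (θ x)) :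
    ∃ c : R, ∀ x, π ^ d • θ x = c • (smulTop (π ^ a) M).mkQ x := by
  have hker : smulTop (π ^ a) M ≤ LinearMap.ker θ := by
    rintro _ ⟨y, rfl⟩
    obtain ⟨z, hz⟩ := (smulTop (π ^ a) M).mkQ_surjective (θ y)
    rw [LinearMap.mem_ker, LinearMap.smul_apply, LinearMap.id_apply, map_smul, ← hz, ← map_smul]
    exact (Submodule.Quotient.mk_eq_zero _).2 ⟨z, rfl⟩
  obtain ⟨c, hc⟩ := hd.2 a ha ((smulTop (π ^ a) M).liftQ θ hker) fun g => by
    refine Submodule.linearMap_qext _ (LinearMap.ext fun x => ?_)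
    simpa [quotEnd] using hθ g x
  exact ⟨c, fun x => by simpa using LinearMap.congr_fun hc ((smulTop (π ^ a) M).mkQ x)⟩

/-- The inductive step, from `k` to `k + 1` coordinates. -/
theorem ReducibilityCond.smul_mem_succ {R : Type*} [CommRing R] {π : R} {G M : Type*}
    [AddCommGroup M] [Module R M] {act : G → Module.End R M} {d n : ℕ}
    (hd : ReducibilityCond π act d) (hπ : π ^ n = 0)
    (hdvd : ∀ a ≤ n, ∀ x : R, π ^ (n - a) * x = 0 → π ^ a ∣ x)
    {k e : ℕ} (H : Submodule R (Fin (k + 1) → M))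
    (hH : ∀ g, ∀ h ∈ H, (fun i => act g (h i)) ∈ H)
    (hinj : ∀ s : Fin (k + 1) → R, (∀ h ∈ H, ∑ i, s i • h i = 0) → s = 0)
    (htail : ∀ φ : Fin k → M, ∃ h ∈ H, ∀ i : Fin k, h i.succ = π ^ e • φ i)
    (φ : Fin (k + 1) → M) : π ^ (2 * e + 2 * d) • φ ∈ H := by
  obtain ⟨a, han, hKa, haK⟩ := hd.exists_le_and_le hπ
    (H.comap (LinearMap.single R (fun _ : Fin (k + 1) => M) 0)) (fun g x hx => by
      have := hH g _ hx
      refine (congrArg (· ∈ H) (funext fun i => ?_)).mp this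
      rcases Fin.eq_zero_or_eq_succ i with rfl | ⟨j, rfl⟩ <;> simp)
  have key : ∀ h ∈ H, (∀ i : Fin k, h i.succ = 0) → h 0 ∈ smulTop (π ^ a) M := by
    intro h hh h0
    refine hKa ?_
    refine (congrArg (· ∈ H) (funext fun i => ?_)).mp hh
    rcases Fin.eq_zero_or_eq_succ i with rfl | ⟨j, rfl⟩ <;> simp [h0]
  have hda : π ^ a ∣ π ^ (e + d) := by
    rcases Nat.eq_zero_or_pos a with rfl | ha
    · simp
    choose l hlH hl using htail
    have lift_eq : ∀ φ, ∀ h ∈ H, (∀ i : Fin k, h i.succ = π ^ e • φ i) →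
        (smulTop (π ^ a) M).mkQ (l φ 0) = (smulTop (π ^ a) M).mkQ (h 0) := fun φ h hh hφ =>
      (Submodule.Quotient.eq _).2 (key _ (H.sub_mem (hlH φ) hh) fun i => by simp [hl, hφ])
    let Θ : (Fin k → M) →ₗ[R] M ⧸ smulTop (π ^ a) M :=
      { toFun := fun φ => (smulTop (π ^ a) M).mkQ (l φ 0)
        map_add' := fun φ ψ => by
          rw [← map_add]
          exact lift_eq _ _ (H.add_mem (hlH φ) (hlH ψ)) fun i => by simp [hl]
        map_smul' := fun c φ => by
          rw [RingHom.id_apply, ← map_smul]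
          exact lift_eq _ _ (H.smul_mem c (hlH φ)) fun i => by simp [hl, smul_comm c] }
    have hΘ : ∀ i : Fin k, ∃ c : R, ∀ x, π ^ d • Θ (Pi.single i x) =
        c • (smulTop (π ^ a) M).mkQ x := fun i =>
      hd.exists_smul_eq ha (Θ ∘ₗ LinearMap.single R (fun _ => M) i) fun g x => by
        refine lift_eq _ _ (hH g _ (hlH (Pi.single i x))) fun j => ?_
        rw [hl, map_smul]
        congr 1
        exact (Pi.apply_single (fun _ => act g) (fun _ => map_zero _) i x j)
    choose c hc using hΘ
    have hrel : ∀ h ∈ H, π ^ (e + d) • h 0 - ∑ i : Fin k, c i • h i.succ ∈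
        smulTop (π ^ a) M := fun h hh => by
      refine (Submodule.Quotient.eq _).1 ?_
      change (smulTop (π ^ a) M).mkQ _ = (smulTop (π ^ a) M).mkQ _
      have h1 : Θ (fun i => h i.succ) = π ^ e • (smulTop (π ^ a) M).mkQ (h 0) := by
        rw [← map_smul]
        exact lift_eq _ _ (H.smul_mem (π ^ e) hh) fun i => rfl
      have h2 : π ^ d • Θ (fun i => h i.succ) =
          ∑ i : Fin k, c i • (smulTop (π ^ a) M).mkQ (h i.succ) := by
        rw [← Finset.univ_sum_single (fun i : Fin k => h i.succ), map_sum, Finset.smul_sum]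
        exact Finset.sum_congr rfl fun i _ => hc i _
      rw [map_sum, map_smul, add_comm, pow_add, mul_smul, ← h1, h2]
      simp only [map_smul]
    have hs := hinj (π ^ (n - a) • Fin.cons (π ^ (e + d)) fun i => -c i) fun h hh => by
      obtain ⟨y, hy⟩ := mem_smulTop.1 (hrel h hh)
      have : ∑ i, (π ^ (n - a) • (Fin.cons (π ^ (e + d)) fun i => -c i : Fin (k + 1) → R)) i • h i
          = π ^ (n - a) • (π ^ (e + d) • h 0 - ∑ i : Fin k, c i • h i.succ) := by
        simp [Fin.sum_univ_succ, mul_smul, Finset.smul_sum, sub_eq_add_neg]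
      rw [this, ← hy, smul_smul, ← pow_add, Nat.sub_add_cancel han, hπ, zero_smul]
    exact hdvd a han _ (by simpa using congrFun hs 0)
  obtain ⟨h, hh, hφ⟩ := htail fun i => φ i.succ
  obtain ⟨x, hx⟩ := hda
  have hsingle : Pi.single 0 (π ^ (e + 2 * d) • (π ^ e • φ 0 - h 0)) ∈ H :=
    haK (mem_smulTop.2 ⟨x • (π ^ e • φ 0 - h 0), by
      rw [smul_smul]; congr 1
      rw [show e + 2 * d = e + d + d by ring, pow_add π (e + d), hx]; ring⟩)
  convert H.add_mem (H.smul_mem (π ^ (e + 2 * d)) hh) hsingle using 1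
  funext i
  rcases Fin.eq_zero_or_eq_succ i with rfl | ⟨j, rfl⟩
  · simp only [Pi.smul_apply, Pi.add_apply, Pi.single_eq_same, smul_sub, smul_smul, ← pow_add]
    rw [add_sub_cancel]; congr 2; ring
  · simp only [Pi.smul_apply, Pi.add_apply, hφ, smul_smul, ← pow_add]
    rw [Pi.single_eq_of_ne (Fin.succ_ne_zero j), add_zero]; congr 2; ring

theorem ffSeq_succ (r : ℕ) (hr : 1 ≤ r) : ffSeq (r + 1) = 2 * (ffSeq r + 1) := by
  obtain _ | _ | r := r
  · omega
  · rfl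
  · rfl

/-- The coordinate form of the main theorem. -/
theorem ReducibilityCond.smul_mem {R : Type*} [CommRing R] [Nontrivial R] {π : R} {G M : Type*}
    [AddCommGroup M] [Module R M] {act : G → Module.End R M} {d n : ℕ}
    (hd : ReducibilityCond π act d) (hπ : π ^ n = 0)
    (hdvd : ∀ a ≤ n, ∀ x : R, π ^ (n - a) * x = 0 → π ^ a ∣ x) {r : ℕ} (hr : 1 ≤ r) :
    ∀ (H : Submodule R (Fin r → M)), (∀ g, ∀ h ∈ H, (fun i => act g (h i)) ∈ H) →
      (∀ s : Fin r → R, (∀ h ∈ H, ∑ i, s i • h i = 0) → s = 0) →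
      ∀ φ : Fin r → M, π ^ (ffSeq r * d) • φ ∈ H := by
  have hn : 1 ≤ n := Nat.one_le_iff_ne_zero.2 fun h => by simp [h] at hπ
  have hunit : ¬ π ∣ 1 := fun h => by
    have := pow_dvd_pow_of_dvd h n
    simp [hπ] at this
  induction r, hr using Nat.le_induction with
  | base =>
    intro H hH hinj φ
    have hle := hd.1 (H.map (LinearMap.proj 0)) (fun g x hx => by
      obtain ⟨h, hh, rfl⟩ := hx
      exact ⟨_, hH g h hh, rfl⟩) fun hle => hunit (by
        have hs := hinj (fun _ => π ^ (n - 1)) fun h hh => by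
          obtain ⟨y, hy⟩ := mem_smulTop.1 (hle ⟨h, hh, rfl⟩)
          have hy : π • y = h 0 := hy
          rw [Fin.sum_univ_one, ← hy, smul_smul, ← pow_succ, Nat.sub_add_cancel hn, hπ, zero_smul]
        simpa using hdvd 1 hn 1 (by simpa using congrFun hs 0))
    obtain ⟨h, hh, hφ⟩ := hle (mem_smulTop.2 ⟨φ 0, rfl⟩)
    rw [SetLike.mem_coe] at hh
    convert hh using 1
    funext i
    rw [Subsingleton.elim i 0]
    simpa [ffSeq] using hφ.symm
  | succ k hk ih =>
    intro H hH hinj φ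
    have htail := ih (H.map (LinearMap.funLeft R M Fin.succ)) (fun g x hx => by
      obtain ⟨h, hh, rfl⟩ := hx
      exact ⟨_, hH g h hh, rfl⟩) fun s hs => by
        have h0 := hinj (Fin.cons 0 s) fun h hh => by
          simpa [Fin.sum_univ_succ] using hs _ ⟨h, hh, rfl⟩
        funext i
        simpa using congrFun h0 i.succ
    have := hd.smul_mem_succ hπ hdvd H hH hinj (fun φ => by
      obtain ⟨h, hh, hφ⟩ := htail φ
      exact ⟨h, hh, fun i => congrFun hφ i⟩) φ
    rwa [ffSeq_succ k hk, show 2 * (ffSeq k + 1) * d = 2 * (ffSeq k * d) + 2 * d by ring]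

/-- In `ℤ/pⁿ`, the elements killed by `p ^ (n - a)` are the multiples of `p ^ a`. -/
theorem ZMod.pow_dvd_of_pow_sub_mul_eq_zero {p n a : ℕ} (hp : p.Prime) (ha : a ≤ n)
    (x : ZMod (p ^ n)) (hx : (p : ZMod (p ^ n)) ^ (n - a) * x = 0) :
    (p : ZMod (p ^ n)) ^ a ∣ x := by
  have : NeZero (p ^ n) := ⟨pow_ne_zero _ hp.ne_zero⟩
  obtain ⟨m, rfl⟩ : ∃ m : ℕ, (m : ZMod (p ^ n)) = x := ⟨x.val, ZMod.natCast_zmod_val x⟩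
  rw [← Nat.cast_pow, ← Nat.cast_mul, ZMod.natCast_eq_zero_iff] at hx
  nth_rewrite 1 [← Nat.sub_add_cancel ha] at hx
  rw [pow_add, Nat.mul_dvd_mul_iff_left (pow_pos hp.pos _)] at hx
  exact_mod_cast Nat.cast_dvd_cast (α := ZMod (p ^ n)) hx

/-- Let `p` be an odd prime, `n ≥ 1`, `T` a finite free `ℤ/pⁿ`-module with an
action of a group `G` having reducibility depth `𝔫 ≤ n`, and `S` a free `ℤ/pⁿ`-module of rank
`r ≥ 1` with trivial `G`-action.  If `H` is a subgroup of `Hom(S,T)`, stable under the `G`-action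
by postcomposition, such that the evaluation map `S → Hom_G(H,T)` is injective, then
`H ⊇ p^{f(r)·𝔫}·Hom(S,T)`. -/
theorem statement0 (p : ℕ) (hp : p.Prime) (hodd : Odd p) (n : ℕ) (hn : 1 ≤ n)
    {G : Type*} [Group G]
    {T : Type*} [AddCommGroup T] [Module (ZMod (p ^ n)) T]
    [Module.Finite (ZMod (p ^ n)) T] [Module.Free (ZMod (p ^ n)) T]
    (ρ : G →* Module.End (ZMod (p ^ n)) T)
    (𝔫 : ℕ) (hdepth : HasReducibilityDepth ((p : ZMod (p ^ n))) (fun g => ρ g) 𝔫)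
    (h𝔫n : 𝔫 ≤ n)
    {S : Type*} [AddCommGroup S] [Module (ZMod (p ^ n)) S]
    [Module.Finite (ZMod (p ^ n)) S] [Module.Free (ZMod (p ^ n)) S]
    (r : ℕ) (hr : 1 ≤ r) (hrank : Module.finrank (ZMod (p ^ n)) S = r)
    (H : AddSubgroup (S →ₗ[ZMod (p ^ n)] T))
    (hstab : ∀ g : G, ∀ h ∈ H, ρ g ∘ₗ h ∈ H)
    (hinj : Function.Injective fun (s : S) => fun (h : H) => (h : S →ₗ[ZMod (p ^ n)] T) s) :
    ∀ φ : S →ₗ[ZMod (p ^ n)] T, ((p : ZMod (p ^ n)) ^ (ffSeq r * 𝔫)) • φ ∈ H := by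
  have : Nontrivial (ZMod (p ^ n)) :=
    have : Fact (1 < p ^ n) := ⟨Nat.one_lt_pow (by omega) hp.one_lt⟩
    inferInstance
  intro φ
  let b : Module.Basis (Fin r) (ZMod (p ^ n)) S := Module.finBasisOfFinrankEq _ _ hrank
  let E := b.constr (M' := T) (ZMod (p ^ n))
  let H' : Submodule (ZMod (p ^ n)) (Fin r → T) :=
    (AddSubgroup.toZModSubmodule (p ^ n) H).comap E.toLinearMap
  have hmem : ∀ v, v ∈ H' ↔ E v ∈ H := fun v => Iff.rfl
  have hE : ∀ h : S →ₗ[ZMod (p ^ n)] T, E (fun i => h (b i)) = h := fun h =>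
    b.ext fun i => by simp [E]
  have hmain := hdepth.1.smul_mem (n := n)
    (by rw [← Nat.cast_pow, ZMod.natCast_self])
    (fun a ha x => ZMod.pow_dvd_of_pow_sub_mul_eq_zero hp ha x) hr H'
    (fun g h hh => by
      rw [hmem] at hh ⊢
      convert hstab g _ hh using 1
      exact b.ext fun i => by simp [E])
    (fun s hs => by
      have h0 : ∑ i, s i • b i = 0 := hinj (funext fun h => by
        have := hs (fun i => (h : S →ₗ[ZMod (p ^ n)] T) (b i)) (by
          rw [hmem, hE]
          exact h.2)
        simpa using this)
      exact funext (Fintype.linearIndependent_iff.1 b.linearIndependent s h0))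
    (fun i => φ (b i))
  rwa [hmem, map_smul, hE] at hmain
end

section
/- Let p be an odd prime, n ≥ 1 an integer, Γ a group, T a finite free ℤ/pⁿ-module, and ρ: Γ → GL(T) a homomorphism whose image G contains a nontrivial scalar automorphism of order coprime to p (multiplication by λ ∈ (ℤ/pⁿ)^× with λ ≠ 1 of order coprime to p). Let Λ = ker ρ. Then restriction of 1-cocycles induces an isomorphism H¹(Γ, T) ≅ Hom_G(Λ^{ab}, T), the group of G-equivariant homomorphisms from the abelianization of Λ to T, where G = Γ/Λ acts on Λ^{ab} by conjugation and on T through ρ. -/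
/-- A unit of `ℤ/pⁿ` of order coprime to `p` is either trivial or not congruent to `1`
modulo `p`. -/
theorem ZMod.isUnit_sub_one_of_coprime_orderOf {p n : ℕ} (hp : p.Prime)
    {u : (ZMod (p ^ n))ˣ} (hu : u ≠ 1) (hcop : (orderOf u).Coprime p) :
    IsUnit ((u : ZMod (p ^ n)) - 1) := by
  have : NeZero (p ^ n) := ⟨pow_ne_zero n hp.ne_zero⟩
  by_contra hnot
  rw [← ZMod.natCast_zmod_val ((u : ZMod (p ^ n)) - 1), ZMod.isUnit_iff_coprime] at hnot
  have hdvd : p ∣ ((u : ZMod (p ^ n)) - 1).val := by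
    by_contra h
    exact hnot (((hp.coprime_iff_not_dvd.mpr h).symm).pow_right n)
  have hdvd' : (p : ZMod (p ^ n)) ∣ (u : ZMod (p ^ n)) - 1 := by
    have h := Nat.cast_dvd_cast (α := ZMod (p ^ n)) hdvd
    rwa [ZMod.natCast_zmod_val] at h
  have hpow : u ^ p ^ n = 1 := by
    have h := dvd_sub_pow_of_dvd_sub hdvd' n
    rw [pow_succ, ← Nat.cast_pow, ZMod.natCast_self, zero_mul, zero_dvd_iff, one_pow,
      sub_eq_zero] at h
    exact Units.ext (by simpa using h)
  exact hu (orderOf_eq_one_iff.mp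
    ((hcop.pow_right n).eq_one_of_dvd (orderOf_dvd_of_pow_eq_one hpow)))

/-- Let `p` be an odd prime, `n ≥ 1`, `Γ` a group, `T` a finite free
`ℤ/pⁿ`-module and `ρ : Γ → GL(T)` a homomorphism whose image contains a nontrivial scalar
automorphism of order coprime to `p`.  Let `Λ = ker ρ`.  Then restriction of 1-cocycles
induces an isomorphism `H¹(Γ,T) ≅ Hom_G(Λᵃᵇ, T)`: restriction of a cocycle to `Λ` is a
`G`-equivariant homomorphism, every `G`-equivariant homomorphism `Λ → T` extends to a cocycle,
and a cocycle vanishing on `Λ` is a coboundary. -/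
theorem statement2 (p n : ℕ) (hp : p.Prime) (hodd : Odd p) (hn : 1 ≤ n)
    {Γ : Type*} [Group Γ]
    {T : Type*} [AddCommGroup T] [Module (ZMod (p ^ n)) T]
    [Module.Finite (ZMod (p ^ n)) T] [Module.Free (ZMod (p ^ n)) T]
    (ρ : Γ →* Module.End (ZMod (p ^ n)) T)
    (hscalar : ∃ (u : (ZMod (p ^ n))ˣ) (g : Γ), u ≠ 1 ∧ Nat.Coprime (orderOf u) p ∧
      ρ g = (u : ZMod (p ^ n)) • (1 : Module.End (ZMod (p ^ n)) T))
    (Λ : Subgroup Γ) (hΛ : ∀ γ : Γ, γ ∈ Λ ↔ ρ γ = 1) :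
    -- restriction of a cocycle to `Λ` is a `G`-equivariant homomorphism on `Λᵃᵇ`:
    (∀ c : Γ → T, (∀ g h : Γ, c (g * h) = c g + ρ g (c h)) →
      ((∀ a b : Λ, c ↑(a * b) = c ↑a + c ↑b) ∧
       (∀ γ : Γ, ∀ a b : Λ, γ * ↑a * γ⁻¹ = ↑b → c ↑b = ρ γ (c ↑a)))) ∧
    -- surjectivity: every `G`-equivariant homomorphism is the restriction of a cocycle:
    (∀ φ : Λ → T, (∀ a b : Λ, φ (a * b) = φ a + φ b) →
      (∀ γ : Γ, ∀ a b : Λ, γ * ↑a * γ⁻¹ = ↑b → φ b = ρ γ (φ a)) →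
      ∃ c : Γ → T, (∀ g h : Γ, c (g * h) = c g + ρ g (c h)) ∧ ∀ a : Λ, c ↑a = φ a) ∧
    -- injectivity: a cocycle restricting to zero on `Λ` is a coboundary:
    (∀ c : Γ → T, (∀ g h : Γ, c (g * h) = c g + ρ g (c h)) → (∀ a : Λ, c ↑a = 0) →
      ∃ x : T, ∀ g : Γ, c g = ρ g x - x) := by
  obtain ⟨u, z, hu, hcop, hz⟩ := hscalar
  obtain ⟨w, hw⟩ := ZMod.isUnit_sub_one_of_coprime_orderOf hp hu hcop
  have hzx (x : T) : ρ z x = (u : ZMod (p ^ n)) • x := by simp [hz]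
  have hΛx (a : Λ) (x : T) : ρ a x = x := by simp [(hΛ a).mp a.2]
  have hinv (g : Γ) : ρ g * ρ g⁻¹ = 1 := by rw [← map_mul, mul_inv_cancel, map_one]
  have hcomm (g : Γ) : z * g * z⁻¹ * g⁻¹ ∈ Λ := by
    have hzg : ρ z * ρ g = ρ g * ρ z := by simp [hz]
    rw [hΛ, map_mul, map_mul, map_mul, hzg, mul_assoc (ρ g), hinv, mul_one, hinv]
  have hsmul (x : T) : (w : ZMod (p ^ n)) • x = (u : ZMod (p ^ n)) • x - x := by
    rw [hw, sub_smul, one_smul]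
  have hres (c : Γ → T) (hc : ∀ g h : Γ, c (g * h) = c g + ρ g (c h)) (a : Λ) (g : Γ) :
      c (a * g) = c a + c g := by
    rw [hc, hΛx]
  refine ⟨fun c hc => ⟨fun a b => hres c hc a b, fun γ a b hab => ?_⟩,
    fun φ hadd hequiv => ?_, fun c hc hvan => ?_⟩
  · have h : c (γ * a) = c (b * γ) := by rw [← hab, inv_mul_cancel_right]
    rw [hc, hres c hc, add_comm] at h
    exact (add_right_cancel h).symm
  · refine ⟨fun g => (↑w⁻¹ : ZMod (p ^ n)) • φ ⟨_, hcomm g⟩, fun g h => ?_, fun a => ?_⟩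
    · have hmem : g * (z * h * z⁻¹ * h⁻¹) * g⁻¹ ∈ Λ := by
        rw [hΛ, map_mul, map_mul, (hΛ _).mp (hcomm h), mul_one, hinv]
      have hsplit : (⟨_, hcomm (g * h)⟩ : Λ) = ⟨_, hcomm g⟩ * ⟨_, hmem⟩ :=
        Subtype.ext (by simp only [Subgroup.coe_mul]; group)
      beta_reduce
      rw [hsplit, hadd, hequiv g ⟨_, hcomm h⟩ ⟨_, hmem⟩ rfl, smul_add, map_smul]
    · have hmem : z * a * z⁻¹ ∈ Λ := by
        rw [hΛ, map_mul, map_mul, (hΛ _).mp a.2, mul_one, hinv]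
      have hsplit : (⟨_, hmem⟩ : Λ) = ⟨_, hcomm a⟩ * a :=
        Subtype.ext (by simp only [Subgroup.coe_mul]; group)
      have hφ : φ ⟨_, hcomm a⟩ = (w : ZMod (p ^ n)) • φ a := by
        rw [hsmul, ← hzx, ← hequiv z a ⟨_, hmem⟩ rfl, hsplit, hadd, add_sub_cancel_right]
      beta_reduce
      rw [hφ, smul_smul, Units.inv_mul, one_smul]
  · refine ⟨(↑w⁻¹ : ZMod (p ^ n)) • c z, fun g => ?_⟩
    have h : c (z * g) = c (g * z) := by
      have h := hres c hc ⟨_, hcomm g⟩ (g * z)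
      rw [hvan, zero_add] at h
      rw [← h]
      congr 1
      group
    rw [hc, hc, hzx] at h
    have hwc : (w : ZMod (p ^ n)) • c g = ρ g (c z) - c z := by
      rw [hsmul, sub_eq_sub_iff_add_eq_add, add_comm, h, add_comm]
    rw [map_smul, ← smul_sub, ← hwc, smul_smul, Units.inv_mul, one_smul]
end

section
/- Let p be an odd prime, G a group, and I a subgroup of G. Let T be a finite free ℤ_p-module with an action of G such that I acts trivially on T, set V = T ⊗_{ℤ_p} ℚ_p with the induced G-action, and assume H¹(G, V) = 0. Then for every integer n ≥ 1, the composite map H¹(G, T) → H¹(G, T/pⁿT) → H¹(I, T/pⁿT), consisting of the map induced by reduction modulo pⁿ followed by restriction to I, is the zero map. -/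
open TensorProduct

/-- If `1 ⊗ m` is the coboundary of a vector of `K ⊗ M` at an operator which is the identity of
the flat module `M`, then `m = 0`. -/
theorem eq_zero_of_one_tmul_eq_baseChange_sub {R K : Type*} [CommRing R] [CommRing K] [Algebra R K]
    [FaithfulSMul R K] {M : Type*} [AddCommGroup M] [Module R M] [Module.Flat R M]
    {f : Module.End R M} (hf : f = 1) {m : M} {v : K ⊗[R] M}
    (h : (1 : K) ⊗ₜ[R] m = f.baseChange K v - v) : m = 0 := by
  subst hf
  refine Module.Flat.tensorProduct_mk_injective R M K ?_
  simpa [Module.End.one_eq_id] using h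

/-- Let `p` be an odd prime, `G` a group, `I ≤ G` a subgroup, `T` a finite
free `ℤ_p`-module with a `G`-action on which `I` acts trivially, and `V = ℚ_p ⊗_{ℤ_p} T` with
the induced `G`-action.  If `H¹(G,V) = 0` (every cocycle valued in `V` is a coboundary), then
for every `n ≥ 1` the composite `H¹(G,T) → H¹(G,T/pⁿT) → H¹(I,T/pⁿT)` vanishes: the reduction
of any `G`-cocycle valued in `T` restricts to an `I`-coboundary in `T/pⁿT`. -/
theorem statement4 (p : ℕ) [Fact p.Prime] (hodd : Odd p)
    {G : Type*} [Group G] (I : Subgroup G)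
    {T : Type*} [AddCommGroup T] [Module ℤ_[p] T]
    [Module.Finite ℤ_[p] T] [Module.Free ℤ_[p] T]
    (ρ : G →* Module.End ℤ_[p] T)
    (hI : ∀ a ∈ I, ρ a = 1)
    (hV : ∀ c : G → ℚ_[p] ⊗[ℤ_[p]] T,
      (∀ g h : G, c (g * h) = c g + (ρ g).baseChange ℚ_[p] (c h)) →
      ∃ v : ℚ_[p] ⊗[ℤ_[p]] T, ∀ g : G, c g = (ρ g).baseChange ℚ_[p] v - v) :
    ∀ n : ℕ, 1 ≤ n →
      ∀ c : G → T, (∀ g h : G, c (g * h) = c g + ρ g (c h)) →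
        ∃ x : T ⧸ smulTop ((p : ℤ_[p]) ^ n) T,
          ∀ a ∈ I, Submodule.Quotient.mk (c a) = quotEnd ((p : ℤ_[p]) ^ n) (ρ a) x - x := by
  intro n _ c hc
  obtain ⟨v, hv⟩ := hV (fun g => 1 ⊗ₜ c g) fun g h => by
    simp [hc, TensorProduct.tmul_add]
  refine ⟨0, fun a ha => ?_⟩
  simp [eq_zero_of_one_tmul_eq_baseChange_sub (hI a ha) (hv a)]
end

section
/- Let p be a prime, V a finite-dimensional ℚ_p-vector space, and Γ → GL(V) a representation of a group Γ such that the ℚ_p-subalgebra of End_{ℚ_p}(V) generated by the image of Γ is all of End_{ℚ_p}(V) (i.e. V is absolutely irreducible). Let T ⊆ V be a Γ-stable lattice. Then there exists an integer c ≥ 0 such that: (a) every Γ-stable lattice L with L ⊆ T and L ⊄ pT contains p^c T, and in particular there are only finitely many such lattices; and (b) for every n ≥ 1, every Γ-stable submodule of T/pⁿT that is not contained in p·(T/pⁿT) contains p^c·(T/pⁿT). -/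
open Module

/-- Every `p`-adic number becomes a `p`-adic integer after multiplication by a power of `p`. -/
theorem Padic.exists_pow_mul_eq_coe {p : ℕ} [Fact p.Prime] (q : ℚ_[p]) :
    ∃ (k : ℕ) (z : ℤ_[p]), (p : ℚ_[p]) ^ k * q = z := by
  obtain ⟨a, b, hb, rfl⟩ := IsFractionRing.div_surjective (A := ℤ_[p]) q
  have hb0 : b ≠ 0 := nonZeroDivisors.ne_zero hb
  refine ⟨b.valuation, a * ((PadicInt.unitCoeff hb0)⁻¹ : ℤ_[p]ˣ), ?_⟩
  have hbq : (b : ℚ_[p]) ≠ 0 := fun h => hb0 (PadicInt.ext h)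
  have hu : (p : ℤ_[p]) ^ b.valuation = b * ((PadicInt.unitCoeff hb0)⁻¹ : ℤ_[p]ˣ) := by
    rw [Units.eq_mul_inv_iff_mul_eq, mul_comm]
    exact (PadicInt.unitCoeff_spec hb0).symm
  have huq := congrArg ((↑) : ℤ_[p] → ℚ_[p]) hu
  push_cast at huq
  simp only [PadicInt.algebraMap_apply]
  rw [huq]
  push_cast
  field_simp

section IntermediateSubmodules

variable {p : ℕ} [Fact p.Prime] {V : Type*} [AddCommGroup V] [Module ℤ_[p] V]

/-- A vector of a lattice all of whose coordinates are divisible by `a` lies in `a T`. -/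
theorem mem_map_smul_id_of_dvd_repr {ι : Type*} [Fintype ι] {T : Submodule ℤ_[p] V}
    (b : Basis ι ℤ_[p] T) (a : ℤ_[p]) (y : T) (h : ∀ i, a ∣ b.repr y i) :
    (y : V) ∈ T.map (a • (LinearMap.id : V →ₗ[ℤ_[p]] V)) := by
  choose z hz using h
  refine ⟨((∑ i, z i • b i : T) : V), Subtype.coe_prop _, ?_⟩
  rw [LinearMap.smul_apply, LinearMap.id_apply, ← Submodule.coe_smul, Finset.smul_sum]
  simp_rw [smul_smul, ← hz]
  rw [b.sum_repr]

/-- There are only finitely many submodules between `p ^ c T` and `T`. -/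
theorem finite_setOf_pow_smul_le {ι : Type*} [Fintype ι] {T : Submodule ℤ_[p] V}
    (b : Basis ι ℤ_[p] T) (c : ℕ) :
    {L : Submodule ℤ_[p] V | L ≤ T ∧
      T.map (((p : ℤ_[p]) ^ c) • (LinearMap.id : V →ₗ[ℤ_[p]] V)) ≤ L}.Finite := by
  let F (L : Submodule ℤ_[p] V) : Set (ι → Fin (p ^ c)) :=
    {a | ((∑ i, ((a i : ℕ) : ℤ_[p]) • b i : T) : V) ∈ L}
  have key : ∀ y : T, ∃ a : ι → Fin (p ^ c), ∀ L : Submodule ℤ_[p] V,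
      T.map (((p : ℤ_[p]) ^ c) • (LinearMap.id : V →ₗ[ℤ_[p]] V)) ≤ L →
      (a ∈ F L ↔ (y : V) ∈ L) := by
    intro y
    refine ⟨fun i => ⟨(b.repr y i).appr c, PadicInt.appr_lt _ _⟩, fun L hL => ?_⟩
    have h := hL (mem_map_smul_id_of_dvd_repr b ((p : ℤ_[p]) ^ c)
      (y - ∑ i, (((b.repr y i).appr c : ℕ) : ℤ_[p]) • b i) fun i => by
        rw [map_sub, Finsupp.sub_apply, b.repr_sum_self]
        exact Ideal.mem_span_singleton.1 (PadicInt.appr_spec c (b.repr y i)))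
    rw [Submodule.coe_sub] at h
    exact ⟨fun ha => (L.sub_mem_iff_left ha).1 h, fun hy => (L.sub_mem_iff_right hy).1 h⟩
  refine Set.Finite.of_finite_image (f := F) (Set.toFinite _) ?_
  have hle : ∀ L L' : Submodule ℤ_[p] V, L ≤ T →
      T.map (((p : ℤ_[p]) ^ c) • (LinearMap.id : V →ₗ[ℤ_[p]] V)) ≤ L →
      T.map (((p : ℤ_[p]) ^ c) • (LinearMap.id : V →ₗ[ℤ_[p]] V)) ≤ L' → F L = F L' → L ≤ L' := by
    intro L L' hT hL hL' hF x hx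
    obtain ⟨a, ha⟩ := key ⟨x, hT hx⟩
    exact (ha L' hL').1 (hF ▸ (ha L hL).2 hx)
  rintro L ⟨hT, hL⟩ L' ⟨hT', hL'⟩ hF
  exact le_antisymm (hle L L' hT hL hL' hF) (hle L' L hT' hL' hL hF.symm)

end IntermediateSubmodules

section StableSubmodules

variable {p : ℕ} [Fact p.Prime] {Γ : Type*} [Group Γ]
  {V : Type*} [AddCommGroup V] [Module ℚ_[p] V] [Module ℤ_[p] V] [IsScalarTower ℤ_[p] ℚ_[p] V]

/-- An element of the `ℚ_p`-algebra generated by `Γ` preserves every `Γ`-stable `ℤ_p`-submodule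
up to a power of `p` that does not depend on the submodule. -/
theorem exists_pow_smul_apply_mem_of_mem_adjoin (ρ : Γ →* Module.End ℚ_[p] V)
    {f : Module.End ℚ_[p] V}
    (hf : f ∈ Algebra.adjoin ℚ_[p] (Set.range fun g : Γ => (ρ g : Module.End ℚ_[p] V))) :
    ∃ N : ℕ, ∀ S : Submodule ℤ_[p] V, (∀ g : Γ, ∀ x ∈ S, ρ g x ∈ S) →
      ∀ x ∈ S, (p : ℤ_[p]) ^ N • f x ∈ S := by
  induction hf using Algebra.adjoin_induction with
  | mem f hf =>
    obtain ⟨g, rfl⟩ := hf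
    exact ⟨0, fun S hS x hx => by simpa using hS g x hx⟩
  | algebraMap q =>
    obtain ⟨k, z, hz⟩ := Padic.exists_pow_mul_eq_coe q
    refine ⟨k, fun S _ x hx => ?_⟩
    have : (p : ℤ_[p]) ^ k • (algebraMap ℚ_[p] (Module.End ℚ_[p] V) q) x = z • x := by
      rw [Module.algebraMap_end_apply, ← algebraMap_smul ℚ_[p] ((p : ℤ_[p]) ^ k),
        ← algebraMap_smul ℚ_[p] z, smul_smul]
      simp [hz]
    rw [this]
    exact S.smul_mem z hx
  | add f g _ _ hf hg =>
    obtain ⟨M, hM⟩ := hf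
    obtain ⟨N, hN⟩ := hg
    refine ⟨M + N, fun S hS x hx => ?_⟩
    rw [LinearMap.add_apply, smul_add]
    refine S.add_mem ?_ ?_
    · rw [pow_add, mul_comm, mul_smul]
      exact S.smul_mem _ (hM S hS x hx)
    · rw [pow_add, mul_smul]
      exact S.smul_mem _ (hN S hS x hx)
  | mul f g _ _ hf hg =>
    obtain ⟨M, hM⟩ := hf
    obtain ⟨N, hN⟩ := hg
    refine ⟨M + N, fun S hS x hx => ?_⟩
    have := hM S hS _ (hN S hS x hx)
    rwa [LinearMap.map_smul_of_tower, smul_smul, ← pow_add] at this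

/-- The coordinates of a lattice vector in the `ℚ_p`-basis extending a basis of the lattice. -/
theorem extendOfIsLattice_coord_coe {ι : Type*} {T : Submodule ℤ_[p] V}
    [Submodule.IsLattice ℚ_[p] T] (b : Basis ι ℤ_[p] T) (j : ι) (y : T) :
    (b.extendOfIsLattice ℚ_[p]).coord j y = (b.repr y j : ℚ_[p]) := by
  classical
  have h : ((b.extendOfIsLattice ℚ_[p]).coord j).restrictScalars ℤ_[p] ∘ₗ T.subtype =
      Algebra.linearMap ℤ_[p] ℚ_[p] ∘ₗ b.coord j := by
    refine b.ext fun i => ?_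
    have := (b.extendOfIsLattice ℚ_[p]).repr_self i
    rw [Basis.extendOfIsLattice_apply] at this
    simp [this, Finsupp.single_apply, apply_ite]
  exact LinearMap.congr_fun h y

/-- There is a uniform `c` such that every `Γ`-stable submodule of `T` not inside `p T`
contains `p ^ c T`. -/
theorem exists_pow_smul_le_of_stable (ρ : Γ →* Module.End ℚ_[p] V)
    (hirr : Algebra.adjoin ℚ_[p] (Set.range fun g : Γ => (ρ g : Module.End ℚ_[p] V)) = ⊤)
    {ι : Type*} [Fintype ι] {T : Submodule ℤ_[p] V} [Submodule.IsLattice ℚ_[p] T]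
    (b : Basis ι ℤ_[p] T) :
    ∃ c : ℕ, ∀ S : Submodule ℤ_[p] V, (∀ g : Γ, ∀ x ∈ S, ρ g x ∈ S) → S ≤ T →
      ¬ S ≤ T.map ((p : ℤ_[p]) • (LinearMap.id : V →ₗ[ℤ_[p]] V)) →
      T.map (((p : ℤ_[p]) ^ c) • (LinearMap.id : V →ₗ[ℤ_[p]] V)) ≤ S := by
  let B := b.extendOfIsLattice ℚ_[p]
  choose N hN using fun ij : ι × ι => exists_pow_smul_apply_mem_of_mem_adjoin ρ
    (f := (B.coord ij.2).smulRight (B ij.1)) (hirr ▸ Algebra.mem_top)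
  refine ⟨∑ ij, N ij, fun S hS hST hSp => ?_⟩
  obtain ⟨x, hxS, hxp⟩ := SetLike.not_le_iff_exists.1 hSp
  obtain ⟨j, hj⟩ : ∃ j, IsUnit (b.repr ⟨x, hST hxS⟩ j) := by
    by_contra! h
    refine hxp (mem_map_smul_id_of_dvd_repr b p ⟨x, hST hxS⟩ fun i => ?_)
    rw [← PadicInt.norm_lt_one_iff_dvd, ← PadicInt.not_isUnit_iff]
    exact h i
  have hb (i : ι) : (p : ℤ_[p]) ^ (∑ ij, N ij) • (b i : V) ∈ S := by
    have h := hN (i, j) S hS x hxS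
    have hx : B.coord j x = _ := extendOfIsLattice_coord_coe b j ⟨x, hST hxS⟩
    have hBi : B i = (b i : V) := b.extendOfIsLattice_apply ℚ_[p] i
    rw [LinearMap.smulRight_apply, hx, hBi, ← PadicInt.algebraMap_apply, algebraMap_smul,
      smul_comm] at h
    rw [S.smul_mem_iff_of_isUnit hj] at h
    obtain ⟨k, hk⟩ := pow_dvd_pow (p : ℤ_[p])
      (Finset.single_le_sum (f := N) (fun _ _ => Nat.zero_le _) (Finset.mem_univ (i, j)))
    rw [hk, mul_comm, mul_smul]
    exact S.smul_mem _ h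
  rintro _ ⟨y, hy, rfl⟩
  have hy' : y = ∑ i, b.repr ⟨y, hy⟩ i • (b i : V) := by
    have := congrArg T.subtype (b.sum_repr ⟨y, hy⟩)
    simp only [map_sum, map_smul, Submodule.subtype_apply] at this
    exact this.symm
  rw [LinearMap.smul_apply, LinearMap.id_apply, hy', Finset.smul_sum]
  refine S.sum_mem fun i _ => ?_
  rw [smul_comm]
  exact S.smul_mem _ (hb i)

end StableSubmodules


/-- Let `V` be a finite-dimensional `ℚ_p`-vector space with an absolutely
irreducible action of a group `Γ` (the `ℚ_p`-subalgebra of `End(V)` generated by the image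
of `Γ` is everything), and let `T ⊆ V` be a `Γ`-stable lattice.  Then there is `c ≥ 0` such
that: (a) every `Γ`-stable lattice `L ⊆ T` with `L ⊄ pT` contains `p^c T`, and in particular
there are only finitely many such lattices; and (b) for every `n ≥ 1`, every `Γ`-stable
submodule of `T/pⁿT` not contained in `p(T/pⁿT)` contains `p^c (T/pⁿT)` (formulated via the
correspondence with `Γ`-stable intermediate submodules `pⁿT ⊆ S' ⊆ T`). -/
theorem statement5 (p : ℕ) [Fact p.Prime]
    {Γ : Type*} [Group Γ]
    {V : Type*} [AddCommGroup V] [Module ℚ_[p] V] [FiniteDimensional ℚ_[p] V]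
    [Module ℤ_[p] V] [IsScalarTower ℤ_[p] ℚ_[p] V]
    (ρ : Γ →* Module.End ℚ_[p] V)
    (hirr : Algebra.adjoin ℚ_[p] (Set.range fun g : Γ => (ρ g : Module.End ℚ_[p] V)) = ⊤)
    (T : Submodule ℤ_[p] V) (hTfg : T.FG)
    (hTspan : Submodule.span ℚ_[p] (T : Set V) = ⊤)
    (hTstab : ∀ g : Γ, ∀ x ∈ T, ρ g x ∈ T) :
    ∃ c : ℕ,
      (∀ L : Submodule ℤ_[p] V, L.FG → Submodule.span ℚ_[p] (L : Set V) = ⊤ →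
        (∀ g : Γ, ∀ x ∈ L, ρ g x ∈ L) → L ≤ T →
        ¬ L ≤ T.map ((p : ℤ_[p]) • (LinearMap.id : V →ₗ[ℤ_[p]] V)) →
        T.map (((p : ℤ_[p]) ^ c) • (LinearMap.id : V →ₗ[ℤ_[p]] V)) ≤ L) ∧
      {L : Submodule ℤ_[p] V | L.FG ∧ Submodule.span ℚ_[p] (L : Set V) = ⊤ ∧
        (∀ g : Γ, ∀ x ∈ L, ρ g x ∈ L) ∧ L ≤ T ∧
        ¬ L ≤ T.map ((p : ℤ_[p]) • (LinearMap.id : V →ₗ[ℤ_[p]] V))}.Finite ∧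
      (∀ n : ℕ, 1 ≤ n → ∀ S' : Submodule ℤ_[p] V,
        (∀ g : Γ, ∀ x ∈ S', ρ g x ∈ S') →
        T.map (((p : ℤ_[p]) ^ n) • (LinearMap.id : V →ₗ[ℤ_[p]] V)) ≤ S' → S' ≤ T →
        ¬ S' ≤ T.map ((p : ℤ_[p]) • (LinearMap.id : V →ₗ[ℤ_[p]] V)) →
        T.map (((p : ℤ_[p]) ^ c) • (LinearMap.id : V →ₗ[ℤ_[p]] V)) ≤ S') := by
  have : Submodule.IsLattice ℚ_[p] T := ⟨hTfg, hTspan⟩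
  have : Module.Free ℤ_[p] T := Submodule.IsLattice.free ℚ_[p] T
  let b := Module.Free.chooseBasis ℤ_[p] T
  obtain ⟨c, hc⟩ := exists_pow_smul_le_of_stable ρ hirr b
  refine ⟨c, fun L _ _ hL hLT hLp => hc L hL hLT hLp, ?_, fun n _ S hS _ hST hSp => hc S hS hST hSp⟩
  exact (finite_setOf_pow_smul_le b c).subset
    fun L ⟨_, _, hL, hLT, hLp⟩ => ⟨hLT, hc L hL hLT hLp⟩
end

section
/- Let p be a prime, Γ a group, and T a Γ-module that is finite free as a ℤ_p-module, such that End_{ℤ_p[Γ]}(T) = ℤ_p·id and such that the torsion subgroup of Ext¹_{ℤ_p[Γ]}(T, T) is annihilated by p^e for some integer e ≥ 0. Then for every integer n ≥ 1, the quotient of End_{ℤ/pⁿ[Γ]}(T/pⁿT) by the submodule of scalar endomorphisms (ℤ/pⁿ)·id is annihilated by p^e. -/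
/-- `Ext¹_{ℤ_p[Γ]}(T,T)`, computed in the abelian category of modules over the group ring
`ℤ_p[Γ]`, with `T` regarded as a `ℤ_p[Γ]`-module via the representation `ρ`. -/
noncomputable def ExtOne (p : ℕ) [Fact p.Prime] (Γ : Type) [Group Γ]
    (T : Type) [AddCommGroup T] [Module ℤ_[p] T] (ρ : Representation ℤ_[p] Γ T) :=
  ((Ext ℤ (ModuleCat (MonoidAlgebra ℤ_[p] Γ)) 1).obj
      (Opposite.op (ModuleCat.of (MonoidAlgebra ℤ_[p] Γ) ρ.asModule))).obj
    (ModuleCat.of (MonoidAlgebra ℤ_[p] Γ) ρ.asModule)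

open CategoryTheory

theorem CategoryTheory.ShortComplex.nsmul_mem_range_of_homology {R : Type*} [Ring R]
    (S : ShortComplex (ModuleCat R)) {a b : ℕ}
    (H : ∀ x : S.homology, a • x = 0 → b • x = 0) {x : S.X₂} (hx : S.g x = 0)
    (hax : a • x ∈ LinearMap.range S.f.hom) : b • x ∈ LinearMap.range S.f.hom := by
  have key : ∀ c : ℕ, c • x ∈ LinearMap.range S.f.hom ↔
      c • (LinearMap.range S.moduleCatToCycles).mkQ (⟨x, hx⟩ : LinearMap.ker S.g.hom) = 0 := by
    intro c
    rw [← map_nsmul, Submodule.mkQ_apply, Submodule.Quotient.mk_eq_zero]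
    constructor
    · rintro ⟨y, hy⟩
      exact ⟨y, Subtype.ext hy⟩
    · rintro ⟨y, hy⟩
      exact ⟨y, congrArg Subtype.val hy⟩
  rw [key] at hax ⊢
  let e : S.homology ≃ₗ[R] LinearMap.ker S.g.hom ⧸ LinearMap.range S.moduleCatToCycles :=
    S.moduleCatHomologyIso.toLinearEquiv
  generalize (LinearMap.range S.moduleCatToCycles).mkQ ⟨x, hx⟩ = y at hax ⊢
  have := H (e.symm y) (by rw [← map_nsmul, hax, map_zero])
  rwa [← map_nsmul, map_eq_zero_iff _ e.symm.injective] at this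

theorem CategoryTheory.ProjectiveResolution.exists_nsmul_eq_d_comp_of_ext
    {C : Type*} [Category* C] [Abelian C] [EnoughProjectives C] {X Y : C}
    (P : ProjectiveResolution X) {a b : ℕ}
    (H : ∀ x : ((Ext ℤ C 1).obj (Opposite.op X)).obj Y, a • x = 0 → b • x = 0)
    (h : P.complex.X 1 ⟶ Y) (hd : P.complex.d 2 1 ≫ h = 0) (k : P.complex.X 0 ⟶ Y)
    (hk : P.complex.d 1 0 ≫ k = a • h) : ∃ k', P.complex.d 1 0 ≫ k' = b • h := by
  let K := P.complex.linearYonedaObj ℤ Y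
  let e := (P.isoExt (R := ℤ) 1 Y ≪≫ K.homologyIsoSc' 0 1 2 (by simp) (by simp)).toLinearEquiv
  have H' : ∀ x : (K.sc' 0 1 2).homology, a • x = 0 → b • x = 0 := by
    intro x hx
    have := H (e.symm x) (by rw [← map_nsmul, hx, map_zero])
    rwa [← map_nsmul, map_eq_zero_iff _ e.symm.injective] at this
  exact (K.sc' 0 1 2).nsmul_mem_range_of_homology (x := h) H' hd ⟨k, hk⟩

theorem CategoryTheory.ShortComplex.ShortExact.exists_comp_g_eq_nsmul_of_ext
    {C : Type*} [Category* C] [Abelian C] [EnoughProjectives C] {X Y Q : C}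
    {a b : ℕ} {π : Y ⟶ Q} (w : (a • 𝟙 Y) ≫ π = 0)
    (hS : (ShortComplex.mk (a • 𝟙 Y) π w).ShortExact)
    (H : ∀ x : ((Ext ℤ C 1).obj (Opposite.op X)).obj Y, a • x = 0 → b • x = 0)
    (ψ : X ⟶ Q) : ∃ φ : X ⟶ Y, φ ≫ π = b • ψ := by
  let P := projectiveResolution X
  let ε : P.complex.X 0 ⟶ X := P.π.f 0
  have hε : P.complex.d 1 0 ≫ ε = 0 := P.complex_d_comp_π_f_zero
  have : Epi ε := inferInstanceAs (Epi (P.π.f 0))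
  have : Epi π := hS.epi_g
  have : Mono (a • 𝟙 Y) := hS.mono_f
  let f := Projective.factorThru (ε ≫ ψ) π
  have hf : f ≫ π = ε ≫ ψ := Projective.factorThru_comp _ _
  let h := hS.exact.lift (P.complex.d 1 0 ≫ f) (by simp [hf, reassoc_of% hε])
  have hh : h ≫ (a • 𝟙 Y) = P.complex.d 1 0 ≫ f := hS.exact.lift_f _ _
  obtain ⟨k, hk⟩ := P.exists_nsmul_eq_d_comp_of_ext H h
    (by rw [← cancel_mono (a • 𝟙 Y), Category.assoc, hh]; simp) f (by simp [← hh])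
  obtain ⟨φ, hφ⟩ : ∃ φ : X ⟶ Y, ε ≫ φ = b • f - a • k :=
    ⟨P.exact₀.desc (b • f - a • k) (by
      simp only [Preadditive.comp_sub, Preadditive.comp_nsmul, hk, ← hh]
      simp [smul_comm a b]), P.exact₀.g_desc _ _⟩
  refine ⟨φ, ?_⟩
  have hw : a • π = 0 := by simpa using w
  rw [← cancel_epi ε, reassoc_of% hφ, Preadditive.sub_comp, Preadditive.nsmul_comp,
    Preadditive.nsmul_comp, ← Preadditive.comp_nsmul k, hw, hf]
  simp

theorem Representation.exists_comp_eq_nsmul_of_ext {k G V W : Type} [CommRing k] [Group G]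
    [AddCommGroup V] [Module k V] [AddCommGroup W] [Module k W]
    {ρ : Representation k G V} {σ : Representation k G W} {a b : ℕ}
    (H : ∀ x : ((Ext ℤ (ModuleCat (MonoidAlgebra k G)) 1).obj
        (Opposite.op (ModuleCat.of (MonoidAlgebra k G) ρ.asModule))).obj
          (ModuleCat.of (MonoidAlgebra k G) ρ.asModule), a • x = 0 → b • x = 0)
    (π : IntertwiningMap ρ σ) (hinj : Function.Injective fun v : V ↦ a • v)
    (hexact : Function.Exact (fun v : V ↦ a • v) π) (hsurj : Function.Surjective π)
    (ψ : IntertwiningMap ρ σ) :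
    ∃ φ : IntertwiningMap ρ ρ, ∀ v, π (φ v) = b • ψ v := by
  let E := IntertwiningMap.equivLinearMapAsModule ρ σ
  let Y := ModuleCat.of (MonoidAlgebra k G) ρ.asModule
  let q : Y ⟶ ModuleCat.of (MonoidAlgebra k G) σ.asModule := ModuleCat.ofHom (E π)
  have hsmul (v : Y) : (a • 𝟙 Y) v = a • v := by simp
  have hfun : ⇑(a • 𝟙 Y) = fun v : V ↦ a • v := funext hsmul
  have w : (a • 𝟙 Y) ≫ q = 0 := by
    ext v
    exact (congrArg π (hsmul v)).trans (hexact.apply_apply_eq_zero v)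
  have hS : (ShortComplex.mk (a • 𝟙 Y) q w).ShortExact :=
    ModuleCat.shortComplex_shortExact _ (by exact hfun ▸ hexact) (by exact hfun ▸ hinj) hsurj
  obtain ⟨φ, hφ⟩ := hS.exists_comp_g_eq_nsmul_of_ext w H (ModuleCat.ofHom (E ψ))
  exact ⟨(IntertwiningMap.equivLinearMapAsModule ρ ρ).symm φ.hom,
    fun v ↦ congr($hφ v)⟩

/-- The representation on `V/aV` induced by a representation on `V`. -/
def Representation.quotSMulTop {k G V : Type*} [CommRing k] [Group G] [AddCommGroup V]
    [Module k V] (ρ : Representation k G V) (a : k) :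
    Representation k G (V ⧸ smulTop a V) where
  toFun g := quotEnd a (ρ g)
  map_one' := by ext; simp [quotEnd]
  map_mul' g h := by ext; simp [quotEnd]


/-- Let `p` be a prime, `Γ` a group, and `T` a `Γ`-module which is finite free
over `ℤ_p`, such that `End_{ℤ_p[Γ]}(T) = ℤ_p·id` and the torsion subgroup of
`Ext¹_{ℤ_p[Γ]}(T,T)` is annihilated by `p^e`.  Then for every `n ≥ 1`, the quotient of
`End_{ℤ/pⁿ[Γ]}(T/pⁿT)` by the scalar endomorphisms is annihilated by `p^e`. -/
theorem statement6 (p : ℕ) [Fact p.Prime]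
    {Γ : Type} [Group Γ]
    {T : Type} [AddCommGroup T] [Module ℤ_[p] T]
    [Module.Finite ℤ_[p] T] [Module.Free ℤ_[p] T]
    (ρ : Representation ℤ_[p] Γ T)
    (hEnd : ∀ φ : T →ₗ[ℤ_[p]] T, (∀ g : Γ, φ ∘ₗ ρ g = ρ g ∘ₗ φ) →
      ∃ c : ℤ_[p], φ = c • LinearMap.id)
    (e : ℕ)
    (hExt : ∀ x : ExtOne p Γ T ρ, (∃ m : ℕ, m ≠ 0 ∧ m • x = 0) → (p ^ e : ℕ) • x = 0) :
    ∀ n : ℕ, 1 ≤ n →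
      ∀ ψ : Module.End ℤ_[p] (T ⧸ smulTop ((p : ℤ_[p]) ^ n) T),
        (∀ g : Γ, ψ ∘ₗ quotEnd ((p : ℤ_[p]) ^ n) (ρ g) = quotEnd ((p : ℤ_[p]) ^ n) (ρ g) ∘ₗ ψ) →
        ∃ c : ℤ_[p], (p : ℤ_[p]) ^ e • ψ = c • (LinearMap.id :
          T ⧸ smulTop ((p : ℤ_[p]) ^ n) T →ₗ[ℤ_[p]] T ⧸ smulTop ((p : ℤ_[p]) ^ n) T) := by
  intro n _ ψ hψ
  let a : ℤ_[p] := (p : ℤ_[p]) ^ n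
  have ha : a ≠ 0 := pow_ne_zero _ (NeZero.ne _)
  have hnsmul (v : T) : (p ^ n : ℕ) • v = a • v := by
    rw [← Nat.cast_smul_eq_nsmul ℤ_[p], Nat.cast_pow]
  let σ := ρ.quotSMulTop a
  let π : Representation.IntertwiningMap ρ σ := ⟨(smulTop a T).mkQ, fun _ ↦ rfl⟩
  let ψ' : Representation.IntertwiningMap ρ σ :=
    ⟨ψ ∘ₗ (smulTop a T).mkQ, fun g ↦ congr($(hψ g) ∘ₗ (smulTop a T).mkQ)⟩
  obtain ⟨φ, hφ⟩ := Representation.exists_comp_eq_nsmul_of_ext (a := p ^ n) (b := p ^ e)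
    (fun x hx ↦ hExt x ⟨p ^ n, pow_ne_zero _ (NeZero.ne p), hx⟩) π
    (fun v w h ↦ smul_right_injective T ha (by simpa only [hnsmul] using h))
    (fun v ↦ by
      simp only [hnsmul]
      exact Submodule.Quotient.mk_eq_zero _)
    (Submodule.mkQ_surjective _) ψ'
  obtain ⟨c, hc⟩ := hEnd φ.toLinearMap φ.isIntertwining'
  refine ⟨c, Submodule.linearMap_qext _ (LinearMap.ext fun v ↦ ?_)⟩
  have hcv : φ v = c • v := congr($hc v)
  have hv := hφ v
  rw [hcv, ← Nat.cast_smul_eq_nsmul ℤ_[p], Nat.cast_pow] at hv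
  exact hv.symm
end

section
/- Let p be a prime, n ≥ 1 an integer, M a finite free ℤ/pⁿ-module, and φ an automorphism of M. Suppose the characteristic polynomial of φ factors as χ_φ = f·g, where f and g are monic polynomials over ℤ/pⁿ whose reductions modulo p are coprime in 𝔽_p[X]. Then M = ker f(φ) ⊕ ker g(φ); both summands are φ-stable finite free ℤ/pⁿ-modules of ranks deg f and deg g respectively; this is the unique decomposition of M as a direct sum of φ-stable submodules annihilated by f(φ) and g(φ) respectively; and every endomorphism of M commuting with φ preserves each summand. -/
open Polynomial

/-- Coprimality of polynomials lifts along a surjection with nil kernel. -/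
theorem Polynomial.isCoprime_of_isCoprime_map {R S : Type*} [CommRing R] [CommRing S]
    {q : R →+* S} (hq : Function.Surjective q) (hker : ∀ x, q x = 0 → IsNilpotent x)
    {f g : R[X]} (h : IsCoprime (f.map q) (g.map q)) : IsCoprime f g := by
  obtain ⟨a, b, hab⟩ := h
  obtain ⟨a, rfl⟩ := map_surjective q hq a
  obtain ⟨b, rfl⟩ := map_surjective q hq b
  have hnil : IsNilpotent (a * f + b * g - 1) := by
    refine Polynomial.isNilpotent_iff.mpr fun i ↦ hker _ ?_
    rw [← coeff_map]
    simp [hab]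
  obtain ⟨u, hu⟩ : IsUnit (a * f + b * g) := by simpa using hnil.isUnit_add_one
  refine ⟨↑u⁻¹ * a, ↑u⁻¹ * b, ?_⟩
  rw [mul_assoc, mul_assoc, ← mul_add, ← hu, Units.inv_mul]

/-- If `f` annihilates a square matrix `A`, then the characteristic polynomial of `A` divides
a power of `f`. -/
theorem Matrix.charpoly_dvd_pow_of_aeval_eq_zero {R ι : Type*} [CommRing R] [Fintype ι]
    [DecidableEq ι] {A : Matrix ι ι R} {f : R[X]} (h : aeval A f = 0) :
    A.charpoly ∣ f ^ Fintype.card ι := by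
  obtain ⟨q, hq⟩ : (X - C X : R[X][X]) ∣ C f - f.map C := by
    rw [dvd_iff_isRoot]
    simp [eval_map, eval₂_C_X]
  have hA : aeval (C.mapMatrix A) (f.map C) = 0 := by
    have := congrArg (C : R →+* R[X]).mapMatrix h
    rw [map_zero, aeval_def, hom_eval₂] at this
    rw [aeval_def, eval₂_map, ← this]
    congr 1
    ext a i j
    simp [Matrix.algebraMap_matrix_apply, apply_ite]
  have hmul := congrArg (aeval (C.mapMatrix A)) hq
  rw [map_sub, map_mul, hA, sub_zero, aeval_C] at hmul
  have hchar : aeval (C.mapMatrix A) (X - C X : R[X][X]) = -A.charmatrix := by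
    simp [Matrix.charmatrix, Matrix.algebraMap_eq_diagonal, Matrix.scalar_apply]
  rw [hchar, neg_mul, ← mul_neg] at hmul
  refine ⟨(-aeval (C.mapMatrix A) q).det, ?_⟩
  rw [Matrix.charpoly, ← Matrix.det_mul, ← hmul, Matrix.algebraMap_eq_diagonal]
  simp

/-- If `f` annihilates an endomorphism `φ` of a finite free module, then the characteristic
polynomial of `φ` divides a power of `f`. -/
theorem LinearMap.charpoly_dvd_pow_of_aeval_eq_zero {R M : Type*} [CommRing R] [AddCommGroup M]
    [Module R M] [Module.Finite R M] [Module.Free R M] {φ : Module.End R M} {f : R[X]}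
    (h : aeval φ f = 0) : ∃ k, φ.charpoly ∣ f ^ k := by
  let b := Module.Free.chooseBasis R M
  refine ⟨_, Matrix.charpoly_dvd_pow_of_aeval_eq_zero (A := toMatrix b b φ) ?_⟩
  have := congrArg (toMatrixAlgEquiv b) h
  rwa [← aeval_algHom_apply, map_zero] at this

/-- If `f(φ)` vanishes on an invariant submodule, then `f` annihilates the restriction of `φ`. -/
theorem LinearMap.aeval_restrict_eq_zero {R M : Type*} [CommRing R] [AddCommGroup M] [Module R M]
    {φ : Module.End R M} {N : Submodule R M} (hN : ∀ x ∈ N, φ x ∈ N) {f : R[X]}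
    (h : ∀ x ∈ N, aeval φ f x = 0) : aeval (φ.restrict hN) f = 0 := by
  ext x
  have : ((aeval (φ.restrict hN) f x : N) : M) = aeval φ f x := by
    simp only [aeval_eq_sum_range, LinearMap.sum_apply, LinearMap.smul_apply,
      Module.End.pow_restrict _, Submodule.coe_sum, Submodule.coe_smul, coe_restrict_apply]
  rw [this]
  simpa using h x x.2

/-- The characteristic polynomial is multiplicative over a decomposition into invariant
submodules. -/
theorem LinearMap.charpoly_eq_mul_of_isCompl {R M : Type*} [CommRing R] [AddCommGroup M]
    [Module R M] [Module.Finite R M] [Module.Free R M] {N₁ N₂ : Submodule R M}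
    [Module.Finite R N₁] [Module.Free R N₁] [Module.Finite R N₂] [Module.Free R N₂]
    (hN : IsCompl N₁ N₂) {φ : Module.End R M} (h₁ : ∀ x ∈ N₁, φ x ∈ N₁)
    (h₂ : ∀ x ∈ N₂, φ x ∈ N₂) :
    φ.charpoly = (φ.restrict h₁).charpoly * (φ.restrict h₂).charpoly := by
  let e := Submodule.prodEquivOfIsCompl N₁ N₂ hN
  rw [← charpoly_prodMap, ← e.charpoly_conj]
  congr 1
  rw [LinearEquiv.conj_apply]
  ext x
  obtain ⟨⟨y, z⟩, rfl⟩ := e.surjective x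
  simp [e]

/-- If the characteristic polynomial of `φ` divides `f * g` with `f`, `g` coprime and `f`
annihilates `φ`, then the rank of the module is at most the degree of `f`. -/
theorem LinearMap.finrank_le_natDegree_of_isCoprime {R M : Type*} [CommRing R] [Nontrivial R]
    [AddCommGroup M] [Module R M] [Module.Finite R M] [Module.Free R M] {φ : Module.End R M}
    {f g : R[X]} (hf : f.Monic) (hfg : IsCoprime f g) (hdvd : φ.charpoly ∣ f * g)
    (h : aeval φ f = 0) : Module.finrank R M ≤ f.natDegree := by
  obtain ⟨k, hk⟩ := charpoly_dvd_pow_of_aeval_eq_zero h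
  have hcop : IsCoprime φ.charpoly g := hfg.pow_left.of_isCoprime_of_dvd_left hk
  obtain ⟨r, hr⟩ := hcop.dvd_of_dvd_mul_right hdvd
  have hr' : r.Monic := φ.charpoly_monic.of_mul_monic_left (hr ▸ hf)
  rw [← φ.charpoly_natDegree, hr, φ.charpoly_monic.natDegree_mul hr']
  exact Nat.le_add_right _ _

theorem LinearMap.isCompl_ker_aeval_of_isCoprime {R M : Type*} [CommRing R] [AddCommGroup M]
    [Module R M] {φ : Module.End R M} {f g : R[X]} (hfg : IsCoprime f g)
    (h : aeval φ (f * g) = 0) : IsCompl (ker (aeval φ f)) (ker (aeval φ g)) :=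
  ⟨disjoint_ker_aeval_of_isCoprime φ hfg, codisjoint_iff.mpr <| by
    rw [sup_ker_aeval_eq_ker_aeval_mul_of_coprime φ hfg, h, ker_zero]⟩

theorem LinearMap.apply_mem_ker_aeval_of_commute {R M : Type*} [CommRing R] [AddCommGroup M]
    [Module R M] {φ ψ : Module.End R M} (h : Commute ψ φ) (f : R[X]) :
    ∀ x ∈ ker (aeval φ f), ψ x ∈ ker (aeval φ f) := by
  intro x hx
  have hcomm : Commute (aeval φ f) ψ := by
    rw [aeval_eq_sum_range]
    exact .sum_left _ _ _ fun i _ ↦ (h.symm.pow_left i).smul_left _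
  rw [mem_ker] at hx ⊢
  rw [← Module.End.mul_apply, hcomm.eq, Module.End.mul_apply, hx, map_zero]

/-- A direct summand of a finite projective module over a local ring is finite free. -/
theorem Submodule.finite_and_free_of_isCompl {R M : Type*} [CommRing R] [IsLocalRing R]
    [AddCommGroup M] [Module R M] [Module.Finite R M] [Module.Projective R M]
    {N₁ N₂ : Submodule R M} (h : IsCompl N₁ N₂) : Module.Finite R N₁ ∧ Module.Free R N₁ := by
  have hfin : Module.Finite R N₁ :=
    .of_surjective (N₁.projectionOnto N₂ h) (projectionOnto_surjective h)
  have : Module.Projective R N₁ := .of_split N₁.subtype (N₁.projectionOnto N₂ h)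
    (projectionOnto_comp_subtype h)
  exact ⟨hfin, Module.free_of_flat_of_isLocalRing⟩

/-- Componentwise comparable pairs of complements agree. -/
theorem IsCompl.eq_of_le_of_le {α : Type*} [Lattice α] [BoundedOrder α] [IsModularLattice α]
    {a b c d : α} (hab : IsCompl a b) (hcd : IsCompl c d) (hac : a ≤ c) (hbd : b ≤ d) :
    a = c := by
  refine eq_of_le_of_inf_le_of_le_sup (z := b) hac ?_ ?_
  · exact ((hcd.disjoint.mono_right hbd).le_bot).trans bot_le
  · rw [hab.sup_eq_top]
    exact le_top

theorem ZMod.isNilpotent_of_castHom_eq_zero {p n : ℕ} (h : p ∣ p ^ n) {x : ZMod (p ^ n)}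
    (hx : ZMod.castHom h (ZMod p) x = 0) : IsNilpotent x := by
  obtain ⟨k, rfl⟩ := ZMod.intCast_surjective x
  rw [map_intCast, ZMod.intCast_zmod_eq_zero_iff_dvd] at hx
  obtain ⟨m, rfl⟩ := hx
  refine ⟨n, ?_⟩
  rw [Int.cast_mul, mul_pow, Int.cast_natCast, ← Nat.cast_pow, ZMod.natCast_self, zero_mul]

/-- Let `p` be a prime, `n ≥ 1`, `M` a finite free `ℤ/pⁿ`-module and `φ` an
automorphism of `M` whose characteristic polynomial factors as `χ_φ = f·g` with `f`, `g` monic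
and coprime modulo `p`.  Then `M = ker f(φ) ⊕ ker g(φ)`, both summands are `φ`-stable finite
free modules of ranks `deg f` and `deg g`, the decomposition is the unique one into `φ`-stable
submodules annihilated by `f(φ)` resp. `g(φ)`, and every endomorphism commuting with `φ`
preserves both summands. -/
theorem statement9 (p n : ℕ) (hp : p.Prime) (hn : 1 ≤ n)
    {M : Type*} [AddCommGroup M] [Module (ZMod (p ^ n)) M]
    [Module.Finite (ZMod (p ^ n)) M] [Module.Free (ZMod (p ^ n)) M]
    (φ : Module.End (ZMod (p ^ n)) M) (hφ : IsUnit φ)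
    (f g : Polynomial (ZMod (p ^ n))) (hf : f.Monic) (hg : g.Monic)
    (hfg : LinearMap.charpoly φ = f * g)
    (hcop : IsCoprime
      (f.map (ZMod.castHom (dvd_pow_self p (Nat.one_le_iff_ne_zero.mp hn)) (ZMod p)))
      (g.map (ZMod.castHom (dvd_pow_self p (Nat.one_le_iff_ne_zero.mp hn)) (ZMod p)))) :
    IsCompl (LinearMap.ker (Polynomial.aeval φ f)) (LinearMap.ker (Polynomial.aeval φ g)) ∧
    (∀ x ∈ LinearMap.ker (Polynomial.aeval φ f), φ x ∈ LinearMap.ker (Polynomial.aeval φ f)) ∧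
    (∀ x ∈ LinearMap.ker (Polynomial.aeval φ g), φ x ∈ LinearMap.ker (Polynomial.aeval φ g)) ∧
    Module.Finite (ZMod (p ^ n)) (LinearMap.ker (Polynomial.aeval φ f)) ∧
    Module.Free (ZMod (p ^ n)) (LinearMap.ker (Polynomial.aeval φ f)) ∧
    Module.finrank (ZMod (p ^ n)) (LinearMap.ker (Polynomial.aeval φ f)) = f.natDegree ∧
    Module.Finite (ZMod (p ^ n)) (LinearMap.ker (Polynomial.aeval φ g)) ∧
    Module.Free (ZMod (p ^ n)) (LinearMap.ker (Polynomial.aeval φ g)) ∧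
    Module.finrank (ZMod (p ^ n)) (LinearMap.ker (Polynomial.aeval φ g)) = g.natDegree ∧
    (∀ N₁ N₂ : Submodule (ZMod (p ^ n)) M,
      (∀ x ∈ N₁, φ x ∈ N₁) → (∀ x ∈ N₂, φ x ∈ N₂) →
      (∀ x ∈ N₁, Polynomial.aeval φ f x = 0) → (∀ x ∈ N₂, Polynomial.aeval φ g x = 0) →
      IsCompl N₁ N₂ →
      N₁ = LinearMap.ker (Polynomial.aeval φ f) ∧ N₂ = LinearMap.ker (Polynomial.aeval φ g)) ∧
    (∀ ψ : Module.End (ZMod (p ^ n)) M, Commute ψ φ →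
      (∀ x ∈ LinearMap.ker (Polynomial.aeval φ f), ψ x ∈ LinearMap.ker (Polynomial.aeval φ f)) ∧
      (∀ x ∈ LinearMap.ker (Polynomial.aeval φ g), ψ x ∈ LinearMap.ker (Polynomial.aeval φ g))) := by
  have hpn := dvd_pow_self p (Nat.one_le_iff_ne_zero.mp hn)
  have : Fact p.Prime := ⟨hp⟩
  have hnil : ∀ x, ZMod.castHom hpn (ZMod p) x = 0 → IsNilpotent x :=
    fun _ ↦ ZMod.isNilpotent_of_castHom_eq_zero hpn
  have : IsLocalRing (ZMod (p ^ n)) := by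
    have : Nontrivial (ZMod (p ^ n)) := (ZMod.castHom hpn (ZMod p)).domain_nontrivial
    exact .of_surjective' (PadicInt.toZModPow (p := p) n) (ZMod.ringHom_surjective _)
  have hcop' : IsCoprime f g :=
    isCoprime_of_isCoprime_map (ZMod.ringHom_surjective _) hnil hcop
  have hcompl := LinearMap.isCompl_ker_aeval_of_isCoprime (φ := φ) hcop'
    (hfg ▸ φ.aeval_self_charpoly)
  have hpres := fun {ψ : Module.End (ZMod (p ^ n)) M} (h : Commute ψ φ) ↦
    LinearMap.apply_mem_ker_aeval_of_commute h
  have hφf := hpres (Commute.refl φ) f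
  have hφg := hpres (Commute.refl φ) g
  obtain ⟨hfin₁, hfree₁⟩ := Submodule.finite_and_free_of_isCompl hcompl
  obtain ⟨hfin₂, hfree₂⟩ := Submodule.finite_and_free_of_isCompl hcompl.symm
  have hchar := hfg.symm.trans (LinearMap.charpoly_eq_mul_of_isCompl hcompl hφf hφg)
  have hle₁ := LinearMap.finrank_le_natDegree_of_isCoprime hf hcop' (hchar ▸ dvd_mul_right _ _)
    (LinearMap.aeval_restrict_eq_zero hφf fun _ ↦ id)
  have hle₂ := LinearMap.finrank_le_natDegree_of_isCoprime hg hcop'.symm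
    (mul_comm f g ▸ hchar ▸ dvd_mul_left _ _)
    (LinearMap.aeval_restrict_eq_zero hφg fun _ ↦ id)
  have hsum := congrArg natDegree hchar
  rw [hf.natDegree_mul hg, (LinearMap.charpoly_monic _).natDegree_mul (LinearMap.charpoly_monic _),
    LinearMap.charpoly_natDegree, LinearMap.charpoly_natDegree] at hsum
  refine ⟨hcompl, hφf, hφg, hfin₁, hfree₁, by lia, hfin₂, hfree₂, by lia, ?_, ?_⟩
  · intro N₁ N₂ _ _ h₁ h₂ hN
    exact ⟨hN.eq_of_le_of_le hcompl h₁ h₂, hN.symm.eq_of_le_of_le hcompl.symm h₂ h₁⟩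
  · exact fun ψ hψ ↦ ⟨hpres hψ f, hpres hψ g⟩
end
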